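/- Let Φ be a Leonard system with parameter array ({θ_i}; {θ*_i}; {φ_i}; {ϕ_i}). Then for 0 ≤ r ≤ d, E*_d E_0 τ*_r(A*) = (φ_1 φ_2 ⋯ φ_r / η_d(θ_0)) · E*_d η_{d−r}(A). -/

import Mathlib

open Matrix Polynomial

/-- A Leonard system in the matrix algebra `Mat_{d+1}(K)`: multiplicity-free
elements `A`, `Astar` with orderings `E`, `Estar` of their primitive idempotents
satisfying the irreducible-tridiagonality conditions. -/
structure LeonardSystem (K : Type*) [Field K] (d : ℕ) where
  A : Matrix (Fin (d+1)) (Fin (d+1)) K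
  Astar : Matrix (Fin (d+1)) (Fin (d+1)) K
  E : Fin (d+1) → Matrix (Fin (d+1)) (Fin (d+1)) K
  Estar : Fin (d+1) → Matrix (Fin (d+1)) (Fin (d+1)) K
  θ : Fin (d+1) → K
  θs : Fin (d+1) → K
  θ_inj : Function.Injective θ
  θs_inj : Function.Injective θs
  E_ne : ∀ i, E i ≠ 0
  Es_ne : ∀ i, Estar i ≠ 0
  E_mul : ∀ i j, E i * E j = if i = j then E i else 0
  Es_mul : ∀ i j, Estar i * Estar j = if i = j then Estar i else 0
  E_sum : ∑ i, E i = 1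
  Es_sum : ∑ i, Estar i = 1
  A_eq : A = ∑ i, θ i • E i
  As_eq : Astar = ∑ i, θs i • Estar i
  trid0 : ∀ i j : Fin (d+1), ((i : ℤ) - (j : ℤ)).natAbs > 1 → E i * Astar * E j = 0
  trid1 : ∀ i j : Fin (d+1), ((i : ℤ) - (j : ℤ)).natAbs = 1 → E i * Astar * E j ≠ 0
  strid0 : ∀ i j : Fin (d+1), ((i : ℤ) - (j : ℤ)).natAbs > 1 → Estar i * A * Estar j = 0
  strid1 : ∀ i j : Fin (d+1), ((i : ℤ) - (j : ℤ)).natAbs = 1 → Estar i * A * Estar j ≠ 0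

namespace LeonardSystem

variable {K : Type*} [Field K] {d : ℕ}

/-- Eigenvalues indexed by `ℕ` (junk value outside range). -/
def θN (L : LeonardSystem K d) (i : ℕ) : K := if h : i < d + 1 then L.θ ⟨i, h⟩ else 0

def θsN (L : LeonardSystem K d) (i : ℕ) : K := if h : i < d + 1 then L.θs ⟨i, h⟩ else 0

/-- `τ_i(A) = (A-θ₀)(A-θ₁)⋯(A-θ_{i-1})`. -/
def tauA (L : LeonardSystem K d) : ℕ → Matrix (Fin (d+1)) (Fin (d+1)) K
  | 0 => 1
  | i + 1 => L.tauA i * (L.A - L.θN i • 1)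

/-- `η_i(A) = (A-θ_d)(A-θ_{d-1})⋯(A-θ_{d-i+1})`. -/
def etaA (L : LeonardSystem K d) : ℕ → Matrix (Fin (d+1)) (Fin (d+1)) K
  | 0 => 1
  | i + 1 => L.etaA i * (L.A - L.θN (d - i) • 1)

/-- `τ*_i(A*)`. -/
def tausA (L : LeonardSystem K d) : ℕ → Matrix (Fin (d+1)) (Fin (d+1)) K
  | 0 => 1
  | i + 1 => L.tausA i * (L.Astar - L.θsN i • 1)

/-- `η*_i(A*)`. -/
def etasA (L : LeonardSystem K d) : ℕ → Matrix (Fin (d+1)) (Fin (d+1)) K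
  | 0 => 1
  | i + 1 => L.etasA i * (L.Astar - L.θsN (d - i) • 1)

/-- Scalar `τ_i(x)`. -/
def tauS (L : LeonardSystem K d) (i : ℕ) (x : K) : K := ∏ j ∈ Finset.range i, (x - L.θN j)

/-- Scalar `η_i(x)`. -/
def etaS (L : LeonardSystem K d) (i : ℕ) (x : K) : K := ∏ j ∈ Finset.range i, (x - L.θN (d - j))

/-- Scalar `τ*_i(x)`. -/
def tausS (L : LeonardSystem K d) (i : ℕ) (x : K) : K := ∏ j ∈ Finset.range i, (x - L.θsN j)

/-- Scalar `η*_i(x)`. -/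
def etasS (L : LeonardSystem K d) (i : ℕ) (x : K) : K := ∏ j ∈ Finset.range i, (x - L.θsN (d - j))

/-- First split sequence `φ_i`. -/
noncomputable def varphi (L : LeonardSystem K d) (i : ℕ) : K :=
  (L.θsN 0 - L.θsN i) * (L.tauA i * L.Estar 0).trace / (L.tauA (i-1) * L.Estar 0).trace

/-- Second split sequence `ϕ_i`. -/
noncomputable def phi (L : LeonardSystem K d) (i : ℕ) : K :=
  (L.θsN 0 - L.θsN i) * (L.etaA i * L.Estar 0).trace / (L.etaA (i-1) * L.Estar 0).trace

/-- `φ₁φ₂⋯φ_r`. -/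
noncomputable def varphiProd (L : LeonardSystem K d) (r : ℕ) : K :=
  ∏ j ∈ Finset.range r, L.varphi (j + 1)

/-- `ϕ₁ϕ₂⋯ϕ_r`. -/
noncomputable def phiProd (L : LeonardSystem K d) (r : ℕ) : K :=
  ∏ j ∈ Finset.range r, L.phi (j + 1)

/-- `φ_d φ_{d-1} ⋯ φ_{d-r+1}`. -/
noncomputable def varphiRevProd (L : LeonardSystem K d) (r : ℕ) : K :=
  ∏ j ∈ Finset.range r, L.varphi (d - j)

/-- `ϕ_d ϕ_{d-1} ⋯ ϕ_{d-r+1}`. -/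
noncomputable def phiRevProd (L : LeonardSystem K d) (r : ℕ) : K :=
  ∏ j ∈ Finset.range r, L.phi (d - j)

end LeonardSystem

namespace LeonardAux

variable {K : Type*} [Field K] {d : ℕ}

lemma rankOne (E : Fin (d+1) → Matrix (Fin (d+1)) (Fin (d+1)) K)
    (hne : ∀ i, E i ≠ 0) (hmul : ∀ i j, E i * E j = if i = j then E i else 0) (i : Fin (d+1)) :
    ∃ v w, E i = Matrix.vecMulVec v w := by
  have h1 : ∀ i, ∃ v, v ≠ 0 ∧ E i *ᵥ v = v := by
    intro i
    by_contra hcon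
    push Not at hcon
    apply hne i
    apply Matrix.ext_of_mulVec_single
    intro k
    rw [Matrix.zero_mulVec]
    by_contra h
    apply hcon _ h
    rw [Matrix.mulVec_mulVec, hmul, if_pos rfl]
  choose v hv0 hv using h1
  have hEv : ∀ i j, E i *ᵥ v j = if i = j then v i else 0 := by
    intro i j
    rw [← hv j, Matrix.mulVec_mulVec, hmul]
    split_ifs with h
    · subst h; rw [hv]
    · simp
  have hli : LinearIndependent K v := by
    rw [Fintype.linearIndependent_iff]
    intro g hg j
    have h2 : E j *ᵥ (∑ i, g i • v i) = g j • v j := by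
      rw [Matrix.mulVec_sum]
      simp [Matrix.mulVec_smul, hEv]
    rw [hg, Matrix.mulVec_zero] at h2
    exact (smul_eq_zero.mp h2.symm).resolve_right (hv0 j)
  let P : Matrix (Fin (d+1)) (Fin (d+1)) K := (Matrix.of v)ᵀ
  have hP : IsUnit P := by
    rw [← Matrix.linearIndependent_cols_iff_isUnit]
    exact hli
  have hEP : E i * P = Matrix.vecMulVec (v i) (Pi.single i 1) := by
    ext a b
    have := congrFun (hEv i b) a
    rw [Matrix.vecMulVec_apply]
    have h3 : (E i * P) a b = (E i *ᵥ v b) a := rfl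
    rw [h3, this]
    by_cases hib : i = b
    · subst hib; simp
    · simp [hib, Ne.symm hib]
  refine ⟨v i, Pi.single i 1 ᵥ* P⁻¹, ?_⟩
  rw [← Matrix.vecMulVec_mul, ← hEP, Matrix.mul_assoc,
    Matrix.mul_nonsing_inv _ ((Matrix.isUnit_iff_isUnit_det _).mp hP), Matrix.mul_one]

/-- Basic data of a complete orthogonal family of nonzero idempotents. -/
structure Fam (E : Fin (d+1) → Matrix (Fin (d+1)) (Fin (d+1)) K) : Prop where
  ne : ∀ i, E i ≠ 0
  mul : ∀ i j, E i * E j = if i = j then E i else 0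
  sum : ∑ i, E i = 1

variable {E F : Fin (d+1) → Matrix (Fin (d+1)) (Fin (d+1)) K}

lemma Fam.mul_ne (hE : Fam E) (i : Fin (d+1)) (X Y : Matrix (Fin (d+1)) (Fin (d+1)) K)
    (hX : X * E i ≠ 0) (hY : E i * Y ≠ 0) : X * E i * Y ≠ 0 := by
  obtain ⟨v, w, h⟩ := rankOne E hE.ne hE.mul i
  rw [h, Matrix.mul_vecMulVec] at hX
  rw [h, Matrix.vecMulVec_mul] at hY
  rw [h, Matrix.mul_vecMulVec, Matrix.vecMulVec_mul]
  intro h0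
  rcases Matrix.vecMulVec_eq_zero.mp h0 with h1 | h1
  · exact hX (by rw [h1, Matrix.zero_vecMulVec])
  · exact hY (by rw [h1, Matrix.vecMulVec_zero])

lemma Fam.sandwich (hE : Fam E) (i : Fin (d+1)) (M : Matrix (Fin (d+1)) (Fin (d+1)) K) :
    E i * M * E i = (M * E i).trace • E i := by
  obtain ⟨v, w, h⟩ := rankOne E hE.ne hE.mul i
  rw [h, Matrix.vecMulVec_mul, Matrix.vecMulVec_mul_vecMulVec, Matrix.mul_vecMulVec,
    Matrix.trace_vecMulVec]
  ext a b
  simp only [Matrix.vecMulVec_apply, Matrix.smul_apply, smul_eq_mul, Pi.smul_apply]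
  rw [← Matrix.dotProduct_mulVec, dotProduct_comm w]
  ring

lemma Fam.trace_one (hE : Fam E) (i : Fin (d+1)) : (E i).trace = 1 := by
  have h := hE.sandwich i 1
  rw [Matrix.mul_one, Matrix.one_mul, hE.mul, if_pos rfl] at h
  have h2 : ((E i).trace - 1) • E i = 0 := by rw [sub_smul, one_smul, ← h, sub_self]
  exact sub_eq_zero.mp ((smul_eq_zero.mp h2).resolve_right (hE.ne i))

lemma Fam.scale (hE : Fam E) (i j : Fin (d+1)) (M N : Matrix (Fin (d+1)) (Fin (d+1)) K)
    (hN : E i * N * E j ≠ 0) : ∃ c : K, E i * M * E j = c • (E i * N * E j) := by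
  obtain ⟨v, w, h⟩ := rankOne E hE.ne hE.mul i
  obtain ⟨v', w', h'⟩ := rankOne E hE.ne hE.mul j
  have key : ∀ M, E i * M * E j = ((w ᵥ* M) ⬝ᵥ v') • Matrix.vecMulVec v w' := by
    intro M
    rw [h, h', Matrix.vecMulVec_mul, Matrix.vecMulVec_mul_vecMulVec]
    ext a b
    simp only [Matrix.vecMulVec_apply, Matrix.smul_apply, smul_eq_mul, Pi.smul_apply,
      MulOpposite.smul_eq_mul_unop, MulOpposite.unop_op]
    ring
  rw [key] at hN
  have hs : (w ᵥ* N) ⬝ᵥ v' ≠ 0 := fun h0 => hN (by rw [h0, zero_smul])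
  refine ⟨((w ᵥ* M) ⬝ᵥ v') / ((w ᵥ* N) ⬝ᵥ v'), ?_⟩
  rw [key, key N, smul_smul, div_mul_cancel₀ _ hs]

lemma Fam.ext_right (hE : Fam E) (X : Matrix (Fin (d+1)) (Fin (d+1)) K)
    (h : ∀ j, X * E j = 0) : X = 0 := by
  rw [← Matrix.mul_one X, ← hE.sum, Matrix.mul_sum]
  exact Finset.sum_eq_zero fun j _ => h j

lemma Fam.mid (hE : Fam E) (X Y : Matrix (Fin (d+1)) (Fin (d+1)) K) :
    X * Y = ∑ k, X * E k * Y := by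
  rw [← Finset.sum_mul, ← Matrix.mul_sum, hE.sum, Matrix.mul_one]

lemma Fam.aeval_mul (hE : Fam E) (θ : Fin (d+1) → K) (A : Matrix (Fin (d+1)) (Fin (d+1)) K)
    (hA : A = ∑ i, θ i • E i) (p : K[X]) (j : Fin (d+1)) :
    aeval A p * E j = (p.eval (θ j)) • E j := by
  have hAE : A * E j = θ j • E j := by
    rw [hA, Finset.sum_mul]
    simp [hE.mul]
  induction p using Polynomial.induction_on' with
  | add p q hp hq => rw [map_add, add_mul, hp, hq, eval_add, add_smul]
  | monomial n a =>
    rw [aeval_monomial, eval_monomial]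
    have : A ^ n * E j = (θ j) ^ n • E j := by
      induction n with
      | zero => simp
      | succ n ih => rw [pow_succ, Matrix.mul_assoc, hAE, Matrix.mul_smul, ih, smul_smul, pow_succ,
          mul_comm]
    rw [Matrix.mul_assoc, this, Matrix.algebraMap_eq_diagonal, mul_smul]
    ext a b
    simp

lemma Fam.mul_aeval (hE : Fam E) (θ : Fin (d+1) → K) (A : Matrix (Fin (d+1)) (Fin (d+1)) K)
    (hA : A = ∑ i, θ i • E i) (p : K[X]) (j : Fin (d+1)) :
    E j * aeval A p = (p.eval (θ j)) • E j := by
  have h : E j * aeval A p = aeval A p * E j := by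
    have hc : Commute (E j) A := by
      rw [hA]
      refine Commute.sum_right _ _ _ fun i _ => ?_
      apply Commute.smul_right
      show E j * E i = E i * E j
      rw [hE.mul, hE.mul]
      by_cases hij : i = j
      · subst hij; rfl
      · rw [if_neg hij, if_neg (Ne.symm hij)]
    induction p using Polynomial.induction_on' with
    | add p q hp hq => rw [map_add, mul_add, add_mul, hp, hq]
    | monomial n a =>
      rw [aeval_monomial]
      exact Commute.mul_right (Algebra.commutes a (E j)).symm (hc.pow_right n)
  rw [h, hE.aeval_mul θ A hA]

lemma Fam.pow_zero' (hE : Fam E) (B : Matrix (Fin (d+1)) (Fin (d+1)) K)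
    (h0 : ∀ i j : Fin (d+1), (j : ℕ) + 1 < i → E i * B * E j = 0) (n : ℕ) :
    ∀ i j : Fin (d+1), (j : ℕ) + n < i → E i * B ^ n * E j = 0 := by
  induction n with
  | zero =>
    intro i j h
    rw [pow_zero, Matrix.mul_one, hE.mul, if_neg]
    rintro rfl; omega
  | succ n ih =>
    intro i j h
    rw [pow_succ, ← Matrix.mul_assoc, Matrix.mul_assoc, hE.mid]
    refine Finset.sum_eq_zero fun k _ => ?_
    by_cases hk : (j : ℕ) + 1 < k
    · rw [Matrix.mul_assoc, ← Matrix.mul_assoc (E k), h0 k j hk, Matrix.mul_zero]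
    · rw [ih i k (by omega), Matrix.zero_mul]

lemma Fam.pow_ne (hE : Fam E) (B : Matrix (Fin (d+1)) (Fin (d+1)) K)
    (h0 : ∀ i j : Fin (d+1), (j : ℕ) + 1 < i → E i * B * E j = 0)
    (h1 : ∀ i j : Fin (d+1), (j : ℕ) + 1 = i → E i * B * E j ≠ 0) (n : ℕ) :
    ∀ i j : Fin (d+1), (j : ℕ) + n = i → E i * B ^ n * E j ≠ 0 := by
  induction n with
  | zero =>
    intro i j h
    have : i = j := by ext; omega
    subst this
    rw [pow_zero, Matrix.mul_one, hE.mul, if_pos rfl]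
    exact hE.ne i
  | succ n ih =>
    intro i j h
    have hk0 : (j : ℕ) + 1 < d + 1 := by have := i.2; omega
    rw [pow_succ, ← Matrix.mul_assoc, Matrix.mul_assoc, hE.mid,
      Finset.sum_eq_single (⟨j + 1, hk0⟩ : Fin (d+1))]
    · apply hE.mul_ne
      · exact ih _ _ (by simp; omega)
      · rw [← Matrix.mul_assoc]; exact h1 _ _ rfl
    · intro k _ hk
      by_cases hk' : (j : ℕ) + 1 < k
      · rw [Matrix.mul_assoc, ← Matrix.mul_assoc (E k), h0 k j hk', Matrix.mul_zero]
      · have : (k : ℕ) ≠ j + 1 := fun h => hk (Fin.ext h)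
        rw [hE.pow_zero' B h0 n i k (by omega), Matrix.zero_mul]
    · simp

lemma Fam.poly_zero (hE : Fam E) (B : Matrix (Fin (d+1)) (Fin (d+1)) K)
    (h0 : ∀ i j : Fin (d+1), (j : ℕ) + 1 < i → E i * B * E j = 0) (p : K[X])
    (i j : Fin (d+1)) (n : ℕ) (hp : p.degree < n) (h : (j : ℕ) + n ≤ i) :
    E i * aeval B p * E j = 0 := by
  rw [aeval_eq_sum_range, Matrix.mul_sum, Finset.sum_mul]
  refine Finset.sum_eq_zero fun k _ => ?_
  rw [Matrix.mul_smul, Matrix.smul_mul]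
  by_cases hk : k < n
  · rw [hE.pow_zero' B h0 k i j (by omega), smul_zero]
  · rw [coeff_eq_zero_of_degree_lt (lt_of_lt_of_le hp (by exact_mod_cast not_lt.mp hk)), zero_smul]

/-- The polynomial `(X - f 0) ⋯ (X - f (n-1))`. -/
noncomputable def pp (f : ℕ → K) (n : ℕ) : K[X] := ∏ j ∈ Finset.range n, (X - C (f j))

lemma pp_monic (f : ℕ → K) (n : ℕ) : (pp f n).Monic := monic_prod_X_sub_C _ _

lemma pp_degree (f : ℕ → K) (n : ℕ) : (pp f n).degree = n := by
  simp [pp, degree_prod]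

lemma pp_eval (f : ℕ → K) (n : ℕ) (x : K) :
    (pp f n).eval x = ∏ j ∈ Finset.range n, (x - f j) := by
  simp [pp, eval_prod]

lemma pp_eval_zero (f : ℕ → K) (n k : ℕ) (hk : k < n) : (pp f n).eval (f k) = 0 := by
  rw [pp_eval]
  exact Finset.prod_eq_zero (Finset.mem_range.mpr hk) (sub_self _)

lemma sub_degree {p q : K[X]} (hp : p.Monic) (hq : q.Monic) {n : ℕ} (h1 : p.degree = n)
    (h2 : q.degree = n) : (p - q).degree < n := by
  rw [← h1]
  exact degree_sub_lt_left (h1.trans h2.symm) hp.ne_zero (by rw [hp.leadingCoeff, hq.leadingCoeff])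

lemma Fam.poly_eq (hE : Fam E) (B : Matrix (Fin (d+1)) (Fin (d+1)) K)
    (h0 : ∀ i j : Fin (d+1), (j : ℕ) + 1 < i → E i * B * E j = 0) (p q : K[X])
    (i j : Fin (d+1)) (n : ℕ) (hp : p.Monic) (hq : q.Monic) (h1 : p.degree = n)
    (h2 : q.degree = n) (h : (j : ℕ) + n ≤ i) :
    E i * aeval B p * E j = E i * aeval B q * E j := by
  rw [← sub_eq_zero, ← Matrix.sub_mul, ← Matrix.mul_sub, ← map_sub]
  exact hE.poly_zero B h0 _ i j n (sub_degree hp hq h1 h2) h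

lemma Fam.poly_ne (hE : Fam E) (B : Matrix (Fin (d+1)) (Fin (d+1)) K)
    (h0 : ∀ i j : Fin (d+1), (j : ℕ) + 1 < i → E i * B * E j = 0)
    (h1 : ∀ i j : Fin (d+1), (j : ℕ) + 1 = i → E i * B * E j ≠ 0) (p : K[X])
    (i j : Fin (d+1)) (n : ℕ) (hp : p.Monic) (hd : p.degree = n) (h : (j : ℕ) + n = i) :
    E i * aeval B p * E j ≠ 0 := by
  rw [hE.poly_eq B h0 p (X ^ n) i j n hp (monic_X_pow n) hd (degree_X_pow n) h.le, map_pow,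
    aeval_X]
  exact hE.pow_ne B h0 h1 n i j h

lemma Fam.rev (hE : Fam E) : Fam (fun i => E (Fin.rev i)) where
  ne i := hE.ne _
  mul i j := by rw [hE.mul]; simp [Fin.rev_inj]
  sum := by
    rw [← hE.sum]
    exact Equiv.sum_comp Fin.revPerm E

end LeonardAux

namespace LeonardSystem

open LeonardAux

variable {K : Type*} [Field K] {d : ℕ}

lemma famE (L : LeonardSystem K d) : Fam L.E := ⟨L.E_ne, L.E_mul, L.E_sum⟩
lemma famEs (L : LeonardSystem K d) : Fam L.Estar := ⟨L.Es_ne, L.Es_mul, L.Es_sum⟩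

lemma tauA_eq (L : LeonardSystem K d) (n : ℕ) : L.tauA n = aeval L.A (pp L.θN n) := by
  induction n with
  | zero => simp [tauA, pp]
  | succ n ih =>
    rw [tauA, ih, pp, pp, Finset.prod_range_succ, map_mul]
    simp [Algebra.algebraMap_eq_smul_one]

lemma etaA_eq (L : LeonardSystem K d) (n : ℕ) :
    L.etaA n = aeval L.A (pp (fun j => L.θN (d - j)) n) := by
  induction n with
  | zero => simp [etaA, pp]
  | succ n ih =>
    rw [etaA, ih, pp, pp, Finset.prod_range_succ, map_mul]
    simp [Algebra.algebraMap_eq_smul_one]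

lemma tausA_eq (L : LeonardSystem K d) (n : ℕ) : L.tausA n = aeval L.Astar (pp L.θsN n) := by
  induction n with
  | zero => simp [tausA, pp]
  | succ n ih =>
    rw [tausA, ih, pp, pp, Finset.prod_range_succ, map_mul]
    simp [Algebra.algebraMap_eq_smul_one]

lemma θN_val (L : LeonardSystem K d) (j : Fin (d+1)) : L.θN j = L.θ j := by
  rw [θN, dif_pos j.2]

lemma θsN_val (L : LeonardSystem K d) (j : Fin (d+1)) : L.θsN j = L.θs j := by
  rw [θsN, dif_pos j.2]

lemma s0 (L : LeonardSystem K d) (i j : Fin (d+1)) (h : (j : ℕ) + 1 < i) :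
    L.Estar i * L.A * L.Estar j = 0 := L.strid0 i j (by omega)

lemma s1 (L : LeonardSystem K d) (i j : Fin (d+1)) (h : (j : ℕ) + 1 = i) :
    L.Estar i * L.A * L.Estar j ≠ 0 := L.strid1 i j (by omega)

lemma r0 (L : LeonardSystem K d) (i j : Fin (d+1)) (h : (j : ℕ) + 1 < i) :
    L.E i.rev * L.Astar * L.E j.rev = 0 :=
  L.trid0 _ _ (by have := i.2; have := j.2; simp only [Fin.val_rev]; omega)

lemma r1 (L : LeonardSystem K d) (i j : Fin (d+1)) (h : (j : ℕ) + 1 = i) :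
    L.E i.rev * L.Astar * L.E j.rev ≠ 0 :=
  L.trid1 _ _ (by have := i.2; have := j.2; simp only [Fin.val_rev]; omega)

lemma E0_poly_zero (L : LeonardSystem K d) (p : K[X]) (j : Fin (d+1)) (n : ℕ)
    (hp : p.degree < n) (h : n ≤ (j : ℕ)) : L.E 0 * aeval L.Astar p * L.E j = 0 := by
  have := L.famE.rev.poly_zero L.Astar L.r0 p (Fin.last d) j.rev n hp
    (by have := j.2; simp only [Fin.val_rev, Fin.val_last]; omega)
  simpa using this

lemma E0_poly_ne (L : LeonardSystem K d) (p : K[X]) (j : Fin (d+1))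
    (hm : p.Monic) (hp : p.degree = (j : ℕ)) : L.E 0 * aeval L.Astar p * L.E j ≠ 0 := by
  have := L.famE.rev.poly_ne L.Astar L.r0 L.r1 p (Fin.last d) j.rev j hm hp
    (by have := j.2; simp only [Fin.val_rev, Fin.val_last]; omega)
  simpa using this

/-- Uniqueness lemma. -/
lemma eq_zero_of (L : LeonardSystem K d) (r : ℕ) (X : Matrix (Fin (d+1)) (Fin (d+1)) K)
    (h1 : ∀ j : Fin (d+1), r < j → X * L.E j = 0)
    (h2 : ∀ j : Fin (d+1), (j : ℕ) ≤ r → X * L.Estar j = 0) : X = 0 := by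
  have h3 : X * aeval L.A (pp L.θN (r+1)) = 0 := by
    rw [L.famE.mid]
    refine Finset.sum_eq_zero fun k _ => ?_
    by_cases hk : r < k
    · rw [h1 k hk, Matrix.zero_mul]
    · rw [Matrix.mul_assoc, L.famE.mul_aeval L.θ L.A L.A_eq, ← θN_val,
        pp_eval_zero _ _ _ (by omega), zero_smul, Matrix.mul_zero]
  have h4 : ∀ n : ℕ, ∀ j : Fin (d+1), (j : ℕ) = n → X * L.Estar j = 0 := by
    intro n
    induction n using Nat.strong_induction_on with
    | _ n ih =>
      intro j hj
      by_cases hr : (j : ℕ) ≤ r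
      · exact h2 j hr
      by_contra hne
      have hlt : (j : ℕ) - (r + 1) < d + 1 := by have := j.2; omega
      let m : Fin (d+1) := ⟨(j : ℕ) - (r + 1), hlt⟩
      have hm : (m : ℕ) + (r + 1) = j := by simp [m]; omega
      have h5 : X * aeval L.A (pp L.θN (r+1)) * L.Estar m ≠ 0 := by
        rw [Matrix.mul_assoc, L.famEs.mid, Finset.sum_eq_single j]
        · apply L.famEs.mul_ne _ _ _ hne
          rw [← Matrix.mul_assoc]
          exact L.famEs.poly_ne L.A L.s0 L.s1 _ _ _ (r+1) (pp_monic _ _) (pp_degree _ _) hm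
        · intro k _ hk
          have hkj : (k : ℕ) ≠ j := fun h => hk (Fin.ext h)
          by_cases hkl : (k : ℕ) < j
          · rw [ih k (by omega) k rfl, Matrix.zero_mul]
          · rw [Matrix.mul_assoc, ← Matrix.mul_assoc (L.Estar k),
              L.famEs.poly_zero L.A L.s0 _ _ _ (r+2) (by rw [pp_degree]; norm_cast; omega)
                (by omega), Matrix.mul_zero]
        · simp
      exact h5 (by rw [h3, Matrix.zero_mul])
  exact L.famEs.ext_right X fun j => h4 j j rfl

lemma main_aux (L : LeonardSystem K d) (r : Fin (d+1)) :
    L.etaS d (L.θ 0) ≠ 0 ∧ (L.tauA r * L.Estar 0).trace ≠ 0 ∧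
      L.Estar (Fin.last d) * L.E 0 * L.tausA (r : ℕ) =
        (((∏ j ∈ Finset.range r, (L.θsN 0 - L.θsN (j+1))) * (L.tauA r * L.Estar 0).trace)
          / L.etaS d (L.θ 0)) • (L.Estar (Fin.last d) * L.etaA (d - (r : ℕ))) := by
  have hr := r.2
  rw [tauA_eq, etaA_eq, tausA_eq]
  set η : ℕ → K := fun j => L.θN (d - j) with hη
  set S := ∏ j ∈ Finset.range r, (L.θsN 0 - L.θsN (j+1)) with hS
  set T := aeval L.A (pp L.θN r) with hT
  set t := (T * L.Estar 0).trace with ht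
  have hetaS : L.etaS d (L.θ 0) = (pp η d).eval (L.θ 0) := by rw [pp_eval, etaS]
  rw [hetaS]
  set H := (pp η d).eval (L.θ 0) with hH
  -- vanishing of eta at eigenvalues
  have hηz : ∀ n : ℕ, ∀ j : Fin (d+1), d < j + n → (pp η n).eval (L.θ j) = 0 := by
    intro n j h
    have hj := j.2
    have : L.θ j = η (d - j) := by
      rw [hη, ← θN_val]; congr 1; omega
    rw [this]
    exact pp_eval_zero _ _ _ (by omega)
  have hηd : aeval L.A (pp η d) = H • L.E 0 := by
    rw [← Matrix.mul_one (aeval L.A (pp η d)), ← L.E_sum, Matrix.mul_sum,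
      Finset.sum_eq_single 0]
    · rw [L.famE.aeval_mul L.θ L.A L.A_eq]
    · intro j _ hj
      have : (j : ℕ) ≠ 0 := fun h => hj (Fin.ext h)
      rw [L.famE.aeval_mul L.θ L.A L.A_eq, hηz _ _ (by omega), zero_smul]
    · simp
  set Z := L.Estar (Fin.last d) * L.E 0 * L.Estar 0 with hZ
  have hHZ : L.Estar (Fin.last d) * aeval L.A (pp η d) * L.Estar 0 = H • Z := by
    rw [hηd, Matrix.mul_smul, Matrix.smul_mul]
  have hHZne : H • Z ≠ 0 := by
    rw [← hHZ]
    exact L.famEs.poly_ne L.A L.s0 L.s1 _ _ _ d (pp_monic _ _) (pp_degree _ _) (by simp)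
  have hHne : H ≠ 0 := fun h => hHZne (by rw [h, zero_smul])
  have hZne : Z ≠ 0 := fun h => hHZne (by rw [h, smul_zero])
  -- the two sides
  set u := L.Estar (Fin.last d) * L.E 0 * aeval L.Astar (pp L.θsN r) with hu
  set e := L.Estar (Fin.last d) * aeval L.A (pp η (d - r)) with he
  have hu0 : u ≠ 0 := by
    apply L.famE.mul_ne
    · intro h; apply hZne; rw [hZ, h, Matrix.zero_mul]
    · intro h
      apply L.E0_poly_ne (pp L.θsN r) r (pp_monic _ _) (pp_degree _ _)
      rw [h, Matrix.zero_mul]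
  have hu1 : ∀ j : Fin (d+1), (r : ℕ) < j → u * L.E j = 0 := by
    intro j hj
    rw [hu, Matrix.mul_assoc, Matrix.mul_assoc, ← Matrix.mul_assoc (L.E 0),
      L.E0_poly_zero _ j (r+1) (by rw [pp_degree]; norm_cast; omega) hj, Matrix.mul_zero]
  have hu2 : ∀ j : Fin (d+1), (j : ℕ) < r → u * L.Estar j = 0 := by
    intro j hj
    rw [hu, Matrix.mul_assoc, L.famEs.aeval_mul L.θs L.Astar L.As_eq, ← θsN_val,
      pp_eval_zero _ _ _ hj, zero_smul, Matrix.mul_zero]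
  have he1 : ∀ j : Fin (d+1), (r : ℕ) < j → e * L.E j = 0 := by
    intro j hj
    rw [he, Matrix.mul_assoc, L.famE.aeval_mul L.θ L.A L.A_eq, hηz _ _ (by omega), zero_smul,
      Matrix.mul_zero]
  have he2 : ∀ j : Fin (d+1), (j : ℕ) < r → e * L.Estar j = 0 := by
    intro j hj
    exact L.famEs.poly_zero L.A L.s0 _ _ _ (d - r + 1) (by rw [pp_degree]; norm_cast; omega)
      (by simp only [Fin.val_last]; omega)
  have he3 : e * L.Estar r ≠ 0 :=
    L.famEs.poly_ne L.A L.s0 L.s1 _ _ _ (d - r) (pp_monic _ _) (pp_degree _ _)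
      (by simp only [Fin.val_last]; omega)
  obtain ⟨c, hc⟩ : ∃ c : K, u = c • e := by
    obtain ⟨c, hc⟩ := L.famEs.scale (Fin.last d) r (L.E 0 * aeval L.Astar (pp L.θsN r)) _ he3
    refine ⟨c, ?_⟩
    rw [← Matrix.mul_assoc (L.Estar (Fin.last d)), ← hu, ← he] at hc
    rw [← sub_eq_zero]
    apply L.eq_zero_of r
    · intro j hj
      rw [Matrix.sub_mul, Matrix.smul_mul, hu1 j hj, he1 j hj, smul_zero, sub_zero]
    · intro j hj
      rw [Matrix.sub_mul, Matrix.smul_mul]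
      rcases hj.lt_or_eq with h | h
      · rw [hu2 j h, he2 j h, smul_zero, sub_zero]
      · have : j = r := Fin.ext h
        rw [this, hc, sub_self]
  have hcne : c ≠ 0 := fun h => hu0 (by rw [hc, h, zero_smul])
  -- evaluate against `T * Estar 0`
  have heT : e * (T * L.Estar 0) = H • Z := by
    rw [← hHZ, he, hT, ← Matrix.mul_assoc, Matrix.mul_assoc (L.Estar _), ← map_mul]
    refine L.famEs.poly_eq L.A L.s0 _ _ _ _ d ((pp_monic _ _).mul (pp_monic _ _)) (pp_monic _ _)
      ?_ (pp_degree _ _) (by simp)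
    rw [degree_mul, pp_degree, pp_degree]
    norm_cast; omega
  have hq : L.E 0 * aeval L.Astar (pp L.θsN r) * T
      = L.E 0 * aeval L.Astar (pp (fun j => L.θsN (j+1)) r) * T := by
    rw [← sub_eq_zero, ← Matrix.sub_mul, ← Matrix.mul_sub, ← map_sub, L.famE.mid]
    refine Finset.sum_eq_zero fun k _ => ?_
    by_cases hk : (r : ℕ) ≤ k
    · rw [L.E0_poly_zero _ k r (sub_degree (pp_monic _ _) (pp_monic _ _) (pp_degree _ _)
        (pp_degree _ _)) hk, Matrix.zero_mul]
    · rw [Matrix.mul_assoc, hT, L.famE.mul_aeval L.θ L.A L.A_eq, ← θN_val,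
        pp_eval_zero _ _ _ (by omega), zero_smul, Matrix.mul_zero]
  have hps : aeval L.Astar (pp (fun j => L.θsN (j+1)) r) * (T * L.Estar 0)
      = (S * t) • L.Estar 0 := by
    rw [L.famEs.mid, Finset.sum_eq_single 0]
    · rw [L.famEs.aeval_mul L.θs L.Astar L.As_eq, Matrix.smul_mul, ← Matrix.mul_assoc,
        L.famEs.sandwich, smul_smul, pp_eval, ← θsN_val]
      rfl
    · intro j _ hj
      have hj0 : (j : ℕ) ≠ 0 := fun h => hj (Fin.ext h)
      by_cases hjr : (j : ℕ) ≤ r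
      · have : L.θs j = (fun j => L.θsN (j+1)) ((j : ℕ) - 1) := by
          rw [← θsN_val]; show _ = L.θsN _; congr 1; omega
        rw [L.famEs.aeval_mul L.θs L.Astar L.As_eq, this,
          pp_eval_zero (fun j => L.θsN (j+1)) r ((j : ℕ) - 1) (by omega),
          zero_smul, Matrix.zero_mul]
      · rw [Matrix.mul_assoc, ← Matrix.mul_assoc (L.Estar j), hT,
          L.famEs.poly_zero L.A L.s0 _ _ _ (r+1) (by rw [pp_degree]; norm_cast; omega)
            (by simp; omega), Matrix.mul_zero]
    · simp
  have huT : u * (T * L.Estar 0) = (S * t) • Z := by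
    calc u * (T * L.Estar 0)
        = L.Estar (Fin.last d) * (L.E 0 * aeval L.Astar (pp L.θsN r) * T) * L.Estar 0 := by
          rw [hu]; simp only [Matrix.mul_assoc]
      _ = L.Estar (Fin.last d) * L.E 0 *
          (aeval L.Astar (pp (fun j => L.θsN (j+1)) r) * (T * L.Estar 0)) := by
          rw [hq]; simp only [Matrix.mul_assoc]
      _ = _ := by rw [hps, Matrix.mul_smul]
  have hfin : c * H = S * t := by
    have h : (c * H) • Z = (S * t) • Z := by
      rw [← huT, hc, Matrix.smul_mul, heT, smul_smul]
    exact smul_left_injective K hZne h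
  refine ⟨hHne, ?_, ?_⟩
  · intro h
    rw [h, mul_zero] at hfin
    exact (mul_ne_zero hcne hHne) hfin
  · rw [← hfin, mul_div_cancel_right₀ _ hHne, hc]

lemma varphiProd_eq (L : LeonardSystem K d) (r : ℕ) (hr : r < d + 1) :
    L.varphiProd r = (∏ j ∈ Finset.range r, (L.θsN 0 - L.θsN (j+1))) *
      (L.tauA r * L.Estar 0).trace := by
  induction r with
  | zero => simp [varphiProd, tauA, L.famEs.trace_one]
  | succ r ih =>
    have h := (L.main_aux ⟨r, by omega⟩).2.1
    have h2 := ih (by omega)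
    rw [varphiProd] at h2 ⊢
    rw [Finset.prod_range_succ, h2, Finset.prod_range_succ, varphi, Nat.add_sub_cancel]
    simp only at h
    field_simp

end LeonardSystem

/-- `E*_d E_0 τ*_r(A*) = (φ_1⋯φ_r / η_d(θ_0)) E*_d η_{d-r}(A)`. -/
theorem LeonardSystem.EsdE0_taus {K : Type*} [Field K] {d : ℕ}
    (L : LeonardSystem K d) :
    ∀ r : Fin (d+1),
      L.Estar (Fin.last d) * L.E 0 * L.tausA (r : ℕ) =
        (L.varphiProd (r : ℕ) / L.etaS d (L.θ 0)) •
          (L.Estar (Fin.last d) * L.etaA (d - (r : ℕ))) := by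
  intro r
  rw [L.varphiProd_eq r r.2]
  exact (L.main_aux r).2.2
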